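/- Let M be a properly infinite σ-finite von Neumann algebra with a faithful normal semifinite trace τ, and let α ∈ M^n (n ≥ 1) be a commuting self-adjoint n-tuple such that the only finite projection of M belonging to WZ*(α) is 0. Let p, r ∈ M be projections with r τ-finite. Then for every ε > 0 there exists a partial isometry w ∈ M such that ww* ≤ 1 − r, w*w = p, and ‖[w, α]‖ ≤ ε + ‖[p, α]‖. -/

import Mathlib

open ContinuousLinearMap Filter Topology

noncomputable section

namespace VNA

variable {H : Type*} [NormedAddCommGroup H] [InnerProductSpace ℂ H] [CompleteSpace H]

/-- A projection (orthogonal projection): idempotent and self-adjoint. -/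
def IsProjection (p : H →L[ℂ] H) : Prop := p * p = p ∧ star p = p

/-- Murray–von Neumann equivalence of `p` and `q` relative to `M`. -/
def MvNE (M : VonNeumannAlgebra H) (p q : H →L[ℂ] H) : Prop :=
  ∃ v ∈ M, star v * v = p ∧ v * star v = q

/-- `p` is a finite projection of `M`; for projections, `q ≤ p` is the range
containment `p * q = q`. -/
def IsFiniteProjection (M : VonNeumannAlgebra H) (p : H →L[ℂ] H) : Prop :=
  p ∈ M ∧ IsProjection p ∧
    ∀ q, q ∈ M → IsProjection q → p * q = q → MvNE M q p → q = p

def IsInfiniteProjection (M : VonNeumannAlgebra H) (p : H →L[ℂ] H) : Prop :=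
  p ∈ M ∧ IsProjection p ∧ ¬ IsFiniteProjection M p

/-- The centre `Z(M) = M ∩ M'` as a set. -/
def centerSet (M : VonNeumannAlgebra H) : Set (H →L[ℂ] H) :=
  {z | z ∈ M ∧ ∀ y ∈ M, z * y = y * z}

def IsCentralProjection (M : VonNeumannAlgebra H) (z : H →L[ℂ] H) : Prop :=
  IsProjection z ∧ z ∈ centerSet M

def IsProperlyInfiniteProjection (M : VonNeumannAlgebra H) (p : H →L[ℂ] H) : Prop :=
  p ∈ M ∧ IsProjection p ∧
    ∀ z, IsCentralProjection M z → z * p ≠ 0 → IsInfiniteProjection M (z * p)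

def ProperlyInfinite (M : VonNeumannAlgebra H) : Prop :=
  IsProperlyInfiniteProjection M 1

/-- `M` is σ-finite: every family of pairwise orthogonal nonzero projections in `M`
is countable. -/
def SigmaFinite (M : VonNeumannAlgebra H) : Prop :=
  ∀ S : Set (H →L[ℂ] H), (∀ p ∈ S, p ∈ M ∧ IsProjection p ∧ p ≠ 0) →
    (∀ p ∈ S, ∀ q ∈ S, p ≠ q → p * q = 0) → S.Countable

/-- A faithful normal semifinite trace on `M`. -/
structure IsFNSTrace (M : VonNeumannAlgebra H) (τ : (H →L[ℂ] H) → ENNReal) : Prop where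
  map_zero : τ 0 = 0
  additive : ∀ x y : H →L[ℂ] H, x ∈ M → y ∈ M → 0 ≤ x → 0 ≤ y → τ (x + y) = τ x + τ y
  homogeneous : ∀ (c : ℝ) (x : H →L[ℂ] H), 0 ≤ c → x ∈ M → 0 ≤ x →
    τ (c • x) = ENNReal.ofReal c * τ x
  tracial : ∀ x : H →L[ℂ] H, x ∈ M → τ (star x * x) = τ (x * star x)
  faithful : ∀ x : H →L[ℂ] H, x ∈ M → 0 ≤ x → τ x = 0 → x = 0
  normal : ∀ (ι : Type*) [Preorder ι] [IsDirected ι (· ≤ ·)] [Nonempty ι]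
      (f : ι → (H →L[ℂ] H)) (x : H →L[ℂ] H),
      (∀ i, f i ∈ M) → (∀ i, 0 ≤ f i) → Monotone f → (∃ C : ℝ, ∀ i, ‖f i‖ ≤ C) →
      x ∈ M → IsLUB (Set.range f) x → τ x = ⨆ i, τ (f i)
  semifinite : ∀ x : H →L[ℂ] H, x ∈ M → 0 ≤ x → x ≠ 0 →
      ∃ y, y ∈ M ∧ 0 ≤ y ∧ y ≤ x ∧ y ≠ 0 ∧ τ y < ⊤

/-- `p` is a `τ`-finite projection of `M`. -/
def IsTauFiniteProjection (M : VonNeumannAlgebra H) (τ : (H →L[ℂ] H) → ENNReal)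
    (p : H →L[ℂ] H) : Prop :=
  p ∈ M ∧ IsProjection p ∧ τ p < ⊤

/-- `F₁⁺(M) = {x ∈ M : 0 ≤ x ≤ 1, px = x for some τ-finite projection p}`. -/
def F1plus (M : VonNeumannAlgebra H) (τ : (H →L[ℂ] H) → ENNReal) : Set (H →L[ℂ] H) :=
  {x | x ∈ M ∧ 0 ≤ x ∧ x ≤ 1 ∧ ∃ p, IsTauFiniteProjection M τ p ∧ p * x = x}

/-- `K(M,τ)`: operator-norm closure of the τ-finitely supported elements of `M`. -/
def Kideal (M : VonNeumannAlgebra H) (τ : (H →L[ℂ] H) → ENNReal) : Set (H →L[ℂ] H) :=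
  closure {x | x ∈ M ∧ ∃ p, IsTauFiniteProjection M τ p ∧ p * x = x}

/-- A commuting self-adjoint `n`-tuple in `M`. -/
def IsCommutingSelfAdjointTuple (M : VonNeumannAlgebra H) {n : ℕ}
    (α : Fin n → (H →L[ℂ] H)) : Prop :=
  (∀ j, α j ∈ M) ∧ (∀ j, star (α j) = α j) ∧ ∀ i j, α i * α j = α j * α i

/-- `‖[r,α]‖ = max_{1≤j≤n} ‖[r, α(j)]‖`. -/
def commNorm {n : ℕ} (α : Fin n → (H →L[ℂ] H)) (r : H →L[ℂ] H) : ℝ :=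
  ⨆ j, ‖r * α j - α j * r‖

/-- `WZ*(S)`: the double commutant in `B(H)` of `S ∪ Z(M)`. -/
def WZstar (M : VonNeumannAlgebra H) (S : Set (H →L[ℂ] H)) : Set (H →L[ℂ] H) :=
  Set.centralizer (Set.centralizer (S ∪ centerSet M))

/-- A diagonal operator of `M`: `d = Σ_k λ_k p_k` with pairwise orthogonal
projections `p_k ∈ M`, the series converging in the strong operator topology. -/
def IsDiagonal (M : VonNeumannAlgebra H) (d : H →L[ℂ] H) : Prop :=
  ∃ (p : ℕ → H →L[ℂ] H) (lam : ℕ → ℂ),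
    (∀ k, p k ∈ M) ∧ (∀ k, IsProjection (p k)) ∧
    (∀ k l, k ≠ l → p k * p l = 0) ∧
    ∀ ξ : H, HasSum (fun k => lam k • (p k ξ)) (d ξ)

end VNA

namespace VNA
variable {H : Type*} [NormedAddCommGroup H] [InnerProductSpace ℂ H] [CompleteSpace H]

theorem mem_of_comm (M : VonNeumannAlgebra H) (x : H →L[ℂ] H)
    (h : ∀ y ∈ M.commutant, y * x = x * y) : x ∈ M := by
  rw [← VonNeumannAlgebra.commutant_commutant M, VonNeumannAlgebra.mem_commutant_iff]
  exact h

theorem comm_of_mem {M : VonNeumannAlgebra H} {x y : H →L[ℂ] H}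
    (hx : x ∈ M) (hy : y ∈ M.commutant) : y * x = x * y :=
  (VonNeumannAlgebra.mem_commutant_iff.1 hy x hx).symm

theorem cfc_mem (M : VonNeumannAlgebra H) {T : H →L[ℂ] H} (hT : T ∈ M) (f : ℝ → ℝ) :
    cfc f T ∈ M := by
  apply mem_of_comm
  intro y hy
  have : Commute T y := (comm_of_mem hT hy).symm
  exact (this.cfc_real f).symm

theorem IsProjection.compl {p : H →L[ℂ] H} (h : IsProjection p) : IsProjection (1 - p) := by
  obtain ⟨h1, h2⟩ := h
  refine ⟨?_, by simp [h2]⟩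
  simp [mul_sub, sub_mul, h1]

theorem IsProjection.nonneg {p : H →L[ℂ] H} (h : IsProjection p) : 0 ≤ p := by
  have := star_mul_self_nonneg p
  rwa [h.2, h.1] at this

theorem IsProjection.le_one {p : H →L[ℂ] H} (h : IsProjection p) : p ≤ 1 := by
  have := h.compl.nonneg
  rwa [sub_nonneg] at this

theorem IsProjection.sub {p q : H →L[ℂ] H} (hp : IsProjection p) (hq : IsProjection q)
    (h : p * q = q) : IsProjection (p - q) := by
  have h' : q * p = q := by
    have := congrArg star h
    simpa [hp.2, hq.2] using this
  exact ⟨by simp [mul_sub, sub_mul, h, h', hp.1, hq.1], by simp [hp.2, hq.2]⟩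

theorem IsProjection.mul {p q : H →L[ℂ] H} (hp : IsProjection p) (hq : IsProjection q)
    (h : p * q = q * p) : IsProjection (p * q) := by
  refine ⟨?_, by simp [hp.2, hq.2, h]⟩
  calc p * q * (p * q) = p * (q * p) * q := by noncomm_ring
    _ = (p * p) * (q * q) := by rw [← h]; noncomm_ring
    _ = p * q := by rw [hp.1, hq.1]

theorem eq_zero_of_star_mul {x : H →L[ℂ] H} (h : star x * x = 0) : x = 0 :=
  (CStarRing.star_mul_self_eq_zero_iff x).1 h

/-- if `v* v = e` projection then `v e = v`. -/
theorem mul_supp {v e : H →L[ℂ] H} (he : IsProjection e) (h : star v * v = e) : v * e = v := by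
  have : v * (1 - e) = 0 := by
    apply eq_zero_of_star_mul
    have h2 : star (v * (1 - e)) * (v * (1 - e)) = (1 - e) * (star v * v) * (1 - e) := by
      simp [he.2]; noncomm_ring
    rw [h2, h]
    simp [mul_sub, sub_mul, he.1]
  rw [mul_sub, mul_one, sub_eq_zero] at this
  exact this.symm

theorem norm_le_one_of_proj {p : H →L[ℂ] H} (h : IsProjection p) : ‖p‖ ≤ 1 :=
  (CStarAlgebra.norm_le_one_iff_of_nonneg p h.nonneg).2 h.le_one

theorem norm_le_one_of_supp {v e : H →L[ℂ] H} (he : IsProjection e) (h : star v * v = e) :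
    ‖v‖ ≤ 1 := by
  have h1 := CStarRing.norm_star_mul_self (x := v)
  rw [h] at h1
  have := norm_le_one_of_proj he
  nlinarith [norm_nonneg v]

/-- partial isometry: both support projections -/
theorem pi_supp {v : H →L[ℂ] H} (h : v * star v * v = v) :
    IsProjection (star v * v) ∧ IsProjection (v * star v) := by
  refine ⟨⟨?_, by simp⟩, ⟨?_, by simp⟩⟩
  · calc star v * v * (star v * v) = star v * (v * star v * v) := by noncomm_ring
      _ = _ := by rw [h]
  · calc v * star v * (v * star v) = (v * star v * v) * star v := by noncomm_ring
      _ = _ := by rw [h]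

/-- the projection onto an invariant subspace commutes -/
theorem proj_comm (K : Submodule ℂ H) [K.HasOrthogonalProjection] (y : H →L[ℂ] H)
    (h1 : ∀ ξ ∈ K, y ξ ∈ K) (h2 : ∀ ξ ∈ K, star y ξ ∈ K) :
    y * K.starProjection = K.starProjection * y := by
  ext ξ
  simp only [mul_apply_eq_comp]
  symm
  apply Submodule.eq_starProjection_of_mem_orthogonal (h1 _ (K.starProjection_apply_mem ξ))
  rw [← map_sub]
  intro η hη
  rw [← ContinuousLinearMap.adjoint_inner_left]
  exact Submodule.sub_starProjection_mem_orthogonal (K := K) ξ _ (h2 η hη)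

theorem proj_isProjection (K : Submodule ℂ H) [K.HasOrthogonalProjection] :
    IsProjection K.starProjection := by
  have := isStarProjection_starProjection (U := K)
  exact ⟨this.isIdempotentElem, this.isSelfAdjoint⟩

theorem exists_supp (b : H →L[ℂ] H) : ∃ E : H →L[ℂ] H, IsProjection E ∧ b * E = b ∧
    (∀ a : H →L[ℂ] H, b * a = 0 → E * a = 0) ∧
    (∀ y : H →L[ℂ] H, y * b = b * y → star y * b = b * star y → y * E = E * y) ∧
    (∀ ξ, b ξ = 0 → E ξ = 0) := by
  let K : Submodule ℂ H := b.ker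
  have hKc : IsClosed (K : Set H) := b.isClosed_ker
  have : CompleteSpace K := hKc.completeSpace_coe
  have hbP : b * K.starProjection = 0 := by
    ext ξ
    exact K.starProjection_apply_mem ξ
  refine ⟨1 - K.starProjection, (proj_isProjection K).compl, ?_, ?_, ?_, ?_⟩
  · rw [mul_sub, hbP]; simp
  · intro a ha
    rw [sub_mul, sub_eq_zero, one_mul]
    ext ξ
    symm
    apply Submodule.starProjection_eq_self_iff.2
    change b (a ξ) = 0
    exact congrArg (fun f : H →L[ℂ] H => f ξ) ha
  · intro y h1 h2
    have := proj_comm K y (fun ξ hξ => by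
      have hξ' : b ξ = 0 := hξ
      have : b (y ξ) = y (b ξ) := (congrArg (fun f : H →L[ℂ] H => f ξ) h1).symm
      change b (y ξ) = 0
      rw [this, hξ', map_zero]) (fun ξ hξ => by
      have hξ' : b ξ = 0 := hξ
      have : b (star y ξ) = star y (b ξ) := (congrArg (fun f : H →L[ℂ] H => f ξ) h2).symm
      change b (star y ξ) = 0
      rw [this, hξ', map_zero])
    rw [mul_sub, sub_mul, this]; simp
  · intro ξ hξ
    have : K.starProjection ξ = ξ := Submodule.starProjection_eq_self_iff.2 hξ
    simp [this]

theorem supp_mem (M : VonNeumannAlgebra H) {b E : H →L[ℂ] H} (hb : b ∈ M)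
    (hE : ∀ y : H →L[ℂ] H, y * b = b * y → star y * b = b * star y → y * E = E * y) : E ∈ M := by
  apply mem_of_comm
  intro y hy
  exact hE y (comm_of_mem hb hy) (comm_of_mem hb (star_mem hy))

/-- central cover -/
theorem exists_central (M : VonNeumannAlgebra H) (h : H →L[ℂ] H) (hh : h ∈ M) :
    ∃ z, IsCentralProjection M z ∧ z * h = h ∧
      ∀ a : H →L[ℂ] H, (∀ y ∈ M, a * y * h = 0) → a * z = 0 := by
  let K₀ : Submodule ℂ H := Submodule.span ℂ {ξ | ∃ y ∈ M, ∃ η, ξ = y (h η)}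
  let K := K₀.topologicalClosure
  have hKc : IsClosed (K : Set H) := K₀.isClosed_topologicalClosure
  have : CompleteSpace K := hKc.completeSpace_coe
  have key : ∀ x : H →L[ℂ] H, (∀ y ∈ M, ∀ η, x (y (h η)) ∈ K₀) → ∀ ξ ∈ K, x ξ ∈ K := by
    intro x hx ξ hξ
    have h0 : ∀ ξ ∈ K₀, x ξ ∈ K₀ := by
      intro ξ hξ
      have : K₀ ≤ K₀.comap (x : H →ₗ[ℂ] H) := by
        apply Submodule.span_le.2
        rintro _ ⟨y, hy, η, rfl⟩
        exact hx y hy η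
      exact this hξ
    exact map_mem_closure x.continuous hξ h0
  have hM : ∀ x ∈ M, ∀ ξ ∈ K, x ξ ∈ K := fun x hx => key x (fun y hy η =>
    Submodule.subset_span ⟨x * y, mul_mem hx hy, η, rfl⟩)
  have hM' : ∀ x ∈ M.commutant, ∀ ξ ∈ K, x ξ ∈ K := fun x hx => key x (fun y hy η => by
    refine Submodule.subset_span ⟨y, hy, x η, ?_⟩
    have e : x * (y * h) = y * h * x := comm_of_mem (mul_mem hy hh) hx
    exact congrArg (fun f : H →L[ℂ] H => f η) e)
  refine ⟨K.starProjection, ⟨proj_isProjection K, ?_, ?_⟩, ?_, ?_⟩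
  · apply mem_of_comm
    intro y hy
    exact proj_comm K y (hM' y hy) (hM' _ (star_mem hy))
  · intro y hy
    exact (proj_comm K y (hM y hy) (hM _ (star_mem hy))).symm
  · ext ξ
    apply Submodule.starProjection_eq_self_iff.2
    apply K₀.le_topologicalClosure
    exact Submodule.subset_span ⟨1, one_mem M, ξ, rfl⟩
  · intro a ha
    ext ξ
    have hle : K ≤ a.ker := by
      apply K₀.topologicalClosure_minimal _ a.isClosed_ker
      apply Submodule.span_le.2
      rintro _ ⟨y, hy, η, rfl⟩
      exact congrArg (fun f : H →L[ℂ] H => f η) (ha y hy)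
    exact hle (K.starProjection_apply_mem ξ)

end VNA
namespace VNA
variable {H : Type*} [NormedAddCommGroup H] [InnerProductSpace ℂ H] [CompleteSpace H]

theorem exists_sum (M : VonNeumannAlgebra H) {ι : Type*} (u : ι → H →L[ℂ] H)
    (hu : ∀ i, u i ∈ M) (hpi : ∀ i, u i * star (u i) * u i = u i)
    (h1 : ∀ i j, i ≠ j → star (u i) * u j = 0) (h2 : ∀ i j, i ≠ j → u i * star (u j) = 0) :
    ∃ U ∈ M, (∀ a : H →L[ℂ] H, (∀ i, a * u i = 0) → a * U = 0) ∧
      (∀ a : H →L[ℂ] H, (∀ i, u i * a = 0) → U * a = 0) ∧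
      (∀ i, U * (star (u i) * u i) = u i) ∧ (∀ i, star (u i) * U = star (u i) * u i) ∧
      U * star U * U = U := by
  classical
  -- finite sums are contractions
  have hsq : ∀ (s : Finset ι) (ξ : H), ‖∑ i ∈ s, u i ξ‖ ^ 2 = ∑ i ∈ s, ‖u i ξ‖ ^ 2 := by
    intro s ξ
    have hort : ∀ i j, i ≠ j → inner ℂ (u i ξ) (u j ξ) = 0 := by
      intro i j hij
      rw [← ContinuousLinearMap.adjoint_inner_right]
      have : (star (u i) * u j) ξ = 0 := by rw [h1 i j hij]; rfl
      have e : (ContinuousLinearMap.adjoint (u i)) (u j ξ) = 0 := this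
      rw [e, inner_zero_right]
    induction s using Finset.induction_on with
    | empty => simp
    | insert i s hi ih =>
      rw [Finset.sum_insert hi, Finset.sum_insert hi, ← ih]
      have : inner ℂ (u i ξ) (∑ j ∈ s, u j ξ) = 0 := by
        rw [inner_sum]
        apply Finset.sum_eq_zero
        intro j hj
        exact hort i j (fun h => hi (h ▸ hj))
      have := norm_add_sq_eq_norm_sq_add_norm_sq_of_inner_eq_zero (𝕜 := ℂ) _ _ this
      simpa [sq] using this
  have hbd : ∀ (s : Finset ι) (ξ : H), ‖∑ i ∈ s, u i ξ‖ ≤ ‖ξ‖ := by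
    intro s ξ
    let V := ∑ i ∈ s, u i
    have hV : star V * V = ∑ i ∈ s, star (u i) * u i := by
      simp only [V, star_sum, Finset.sum_mul_sum]
      apply Finset.sum_congr rfl
      intro i hi
      rw [Finset.sum_eq_single i]
      · intro j _ hj; exact h1 i j hj.symm
      · intro h; exact absurd hi h
    have hP : IsProjection (star V * V) := by
      refine ⟨?_, by simp⟩
      rw [hV, Finset.sum_mul_sum]
      apply Finset.sum_congr rfl
      intro i hi
      rw [Finset.sum_eq_single i]
      · exact (pi_supp (hpi i)).1.1
      · intro j _ hj
        calc star (u i) * u i * (star (u j) * u j) = star (u i) * (u i * star (u j)) * u j := by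
              noncomm_ring
          _ = 0 := by rw [h2 i j hj.symm]; simp
      · intro h; exact absurd hi h
    have hn := norm_le_one_of_supp hP rfl
    have := V.le_of_opNorm_le hn ξ
    simpa [V] using this
  have hsum : ∀ ξ, Summable (fun i => u i ξ) := by
    intro ξ
    have hs : Summable (fun i => ‖u i ξ‖ ^ 2) := by
      apply summable_of_sum_le (c := ‖ξ‖ ^ 2) (fun i => by positivity)
      intro s
      rw [← hsq]
      exact pow_le_pow_left₀ (norm_nonneg _) (hbd s ξ) 2
    rw [summable_iff_vanishing_norm] at hs ⊢
    intro ε hε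
    obtain ⟨s, hs⟩ := hs (ε ^ 2) (by positivity)
    refine ⟨s, fun t ht => ?_⟩
    have := hs t ht
    rw [← hsq, Real.norm_of_nonneg (by positivity)] at this
    exact lt_of_pow_lt_pow_left₀ 2 hε.le this
  let U₀ : H →ₗ[ℂ] H :=
    { toFun := fun ξ => ∑' i, u i ξ
      map_add' := fun x y => by
        simp only [map_add]
        exact (hsum x).tsum_add (hsum y)
      map_smul' := fun c x => by
        simp only [map_smul, RingHom.id_apply]
        exact (hsum x).tsum_const_smul c }
  let U : H →L[ℂ] H := U₀.mkContinuous 1 (fun ξ => by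
    rw [one_mul]
    exact le_of_tendsto (hsum ξ).hasSum.norm (Eventually.of_forall fun s => hbd s ξ))
  have hU : ∀ ξ, HasSum (fun i => u i ξ) (U ξ) := fun ξ => (hsum ξ).hasSum
  have hleft : ∀ a : H →L[ℂ] H, (∀ i, a * u i = 0) → a * U = 0 := by
    intro a ha
    ext ξ
    have := (hU ξ).mapL a
    have h0 : (fun i => a (u i ξ)) = fun _ => 0 := by
      funext i
      exact congrArg (fun f : H →L[ℂ] H => f ξ) (ha i)
    rw [h0] at this
    exact this.unique hasSum_zero
  have hright : ∀ a : H →L[ℂ] H, (∀ i, u i * a = 0) → U * a = 0 := by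
    intro a ha
    ext ξ
    have := hU (a ξ)
    have h0 : (fun i => u i (a ξ)) = fun _ => 0 := by
      funext i
      exact congrArg (fun f : H →L[ℂ] H => f ξ) (ha i)
    rw [h0] at this
    exact this.unique hasSum_zero
  have hs1 : ∀ i, U * (star (u i) * u i) = u i := by
    intro i
    ext ξ
    have := hU ((star (u i) * u i) ξ)
    refine this.unique ?_
    convert hasSum_single i ?_ using 1
    · exact congrArg (fun f : H →L[ℂ] H => f ξ) ((hpi i).symm.trans (mul_assoc _ _ _))
    · intro j hj
      have : u j * (star (u i) * u i) = 0 := by rw [← mul_assoc, h2 j i hj, zero_mul]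
      exact congrArg (fun f : H →L[ℂ] H => f ξ) this
  have hs2 : ∀ i, star (u i) * U = star (u i) * u i := by
    intro i
    ext ξ
    have := (hU ξ).mapL (star (u i))
    refine this.unique ?_
    convert hasSum_single i ?_ using 1
    · rfl
    · intro j hj
      exact congrArg (fun f : H →L[ℂ] H => f ξ) (h1 i j hj.symm)
  refine ⟨U, ?_, hleft, hright, hs1, hs2, ?_⟩
  · apply mem_of_comm
    intro y hy
    ext ξ
    have e1 := (hU ξ).mapL y
    have e2 := hU (y ξ)
    refine e1.unique ?_
    have e3 : (fun i => y (u i ξ)) = fun i => u i (y ξ) := by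
      funext i
      exact congrArg (fun f : H →L[ℂ] H => f ξ) (comm_of_mem (hu i) hy)
    rw [e3]
    exact e2
  · have := hleft (U * star U - 1) (fun i => by
      have e : star U * u i = star (u i) * u i := by
        have := congrArg star (hs2 i)
        simpa using this
      rw [sub_mul, mul_assoc, e, hs1]; simp)
    rwa [sub_mul, one_mul, sub_eq_zero] at this

theorem cfc_sa (f : ℝ → ℝ) (T : H →L[ℂ] H) : star (cfc f T) = cfc f T :=
  (cfc_predicate f T : IsSelfAdjoint _)

theorem cfc_mul_aux {T : H →L[ℂ] H} {f g : ℝ → ℝ} (hf : Continuous f)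
    (hg : Continuous g) : cfc f T * cfc g T = cfc (fun t => f t * g t) T :=
  (cfc_mul f g T hf.continuousOn hg.continuousOn).symm

theorem cfc_mul_self_aux {T : H →L[ℂ] H} (hT : IsSelfAdjoint T) {f : ℝ → ℝ}
    (hf : Continuous f) : cfc f T * T = cfc (fun t => f t * t) T := by
  have h := cfc_mul_aux (T := T) hf continuous_id
  rwa [cfc_id ℝ T hT] at h

theorem exists_pi (M : VonNeumannAlgebra H) (x : H →L[ℂ] H) (hx : x ∈ M) (hx0 : x ≠ 0) :
    ∃ v ∈ M, v ≠ 0 ∧ v * star v * v = v ∧ (∀ a : H →L[ℂ] H, a * x = 0 → a * v = 0) ∧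
      (∀ a : H →L[ℂ] H, x * a = 0 → v * a = 0) := by
  set T := star x * x with hTdef
  have hT0 : 0 ≤ T := star_mul_self_nonneg x
  have hTsa : IsSelfAdjoint T := hT0.isSelfAdjoint
  have hTM : T ∈ M := mul_mem (star_mem hx) hx
  have hTn : 0 < ‖T‖ := by
    rw [norm_pos_iff]
    intro h
    exact hx0 (eq_zero_of_star_mul h)
  set δ := ‖T‖ / 2 with hδ
  have hδ0 : 0 < δ := by positivity
  have hpos : ∀ t : ℝ, 0 < max t δ := fun t => lt_of_lt_of_le hδ0 (le_max_right _ _)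
  have hc : Continuous fun t : ℝ => (max t δ)⁻¹ := 
    (continuous_id.max continuous_const).inv₀ (fun t => (hpos t).ne')
  set b := cfc (fun t : ℝ => max (t - δ) 0) T with hb
  set g := cfc (fun t : ℝ => √((max t δ)⁻¹)) T with hg
  set F := cfc (fun t : ℝ => 1 - t * (max t δ)⁻¹) T with hF
  have hbG : b = cfc (fun t : ℝ => max (t - δ) 0 * (max t δ)⁻¹) T * T := by
    rw [cfc_mul_self_aux hTsa (by fun_prop), hb]
    apply cfc_congr
    intro t _
    rcases le_total t δ with h | h
    · simp [max_eq_right (show t - δ ≤ 0 by linarith)]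
    · simp only [max_eq_left h]
      rw [mul_assoc, inv_mul_cancel₀ (by linarith), mul_one]
  have hbF : b * F = 0 := by
    rw [hb, hF, cfc_mul_aux (by fun_prop) (by fun_prop), ← cfc_zero ℝ T]
    apply cfc_congr
    intro t _
    simp only [Pi.zero_apply]
    rcases le_total t δ with h | h
    · rw [max_eq_right (by linarith)]; simp
    · rw [max_eq_left h, mul_inv_cancel₀ (by linarith)]; simp
  have hgTg : g * T * g = 1 - F := by
    have h1 : (1 : H →L[ℂ] H) = cfc (fun _ : ℝ => 1) T := (cfc_const_one ℝ T hTsa).symm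
    rw [hg, cfc_mul_self_aux hTsa (by fun_prop), cfc_mul_aux (by fun_prop) (by fun_prop), h1, hF,
      ← cfc_sub _ _ T (by fun_prop) (by fun_prop)]
    apply cfc_congr
    intro t _
    have := Real.mul_self_sqrt (inv_nonneg.2 (hpos t).le)
    simp only
    linear_combination t * this
  have hb0 : b ≠ 0 := by
    intro h0
    have : T ≤ algebraMap ℝ _ δ := by
      have : cfc (fun t : ℝ => t - δ) T ≤ b := 
        cfc_mono (fun t _ => le_max_left _ _) (by fun_prop) (by fun_prop)
      rw [h0, cfc_sub _ _ T (by fun_prop) (by fun_prop), cfc_id' ℝ T hTsa, cfc_const δ T hTsa,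
        sub_nonpos] at this
      exact this
    have := (CStarAlgebra.norm_le_iff_le_algebraMap T hδ0.le hT0).2 this
    linarith
  obtain ⟨E, hE, hbE, hE0, hEc, -⟩ := exists_supp b
  have hEM : E ∈ M := supp_mem M (cfc_mem M hTM _) hEc
  have hvv : star (x * g * E) * (x * g * E) = E := by
    have : star (x * g * E) * (x * g * E) = E * (g * T * g) * E := by
      simp only [star_mul, hE.2, hTdef]
      rw [hg, cfc_sa]
      noncomm_ring
    rw [this, hgTg, mul_sub, hE0 F hbF]
    simp [hE.1]
  refine ⟨x * g * E, mul_mem (mul_mem hx (cfc_mem M hTM _)) hEM, ?_, ?_, ?_, ?_⟩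
  · intro h
    rw [h] at hvv
    simp only [mul_zero] at hvv
    rw [← hvv, mul_zero] at hbE
    exact hb0 hbE.symm
  · rw [mul_assoc, hvv, mul_assoc _ E E, hE.1]
  · intro a ha
    rw [← mul_assoc, ← mul_assoc, ha]; simp
  · intro a ha
    rw [mul_assoc, hE0 a, mul_zero]
    rw [hbG, mul_assoc, hTdef, mul_assoc, ha]; simp

end VNA
namespace VNA
variable {H : Type*} [NormedAddCommGroup H] [InnerProductSpace ℂ H] [CompleteSpace H]

theorem trace_mono {M : VonNeumannAlgebra H} {τ : (H →L[ℂ] H) → ENNReal} (hτ : IsFNSTrace M τ)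
    {x y : H →L[ℂ] H} (hx : x ∈ M) (hy : y ∈ M) (h0 : 0 ≤ x) (h : x ≤ y) : τ x ≤ τ y := by
  have := hτ.additive x (y - x) hx (sub_mem hy hx) h0 (sub_nonneg.2 h)
  rw [add_sub_cancel] at this
  rw [this]
  exact le_self_add

theorem IsProjection.le_of_mul {p q : H →L[ℂ] H} (hp : IsProjection p) (hq : IsProjection q)
    (h : p * q = q) : q ≤ p := sub_nonneg.1 (hp.sub hq h).nonneg

/-- `0 ≤ y ≤ 1` supported on `k` gives `y ≤ k`. -/
theorem le_proj {y k : H →L[ℂ] H} (hk : IsProjection k) (hy1 : y ≤ 1)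
    (h : k * y * k = y) : y ≤ k := by
  have := star_left_conjugate_le_conjugate hy1 k
  rwa [hk.2, h, mul_one, hk.1] at this

theorem le_of_tendsto_aux {k y : H →L[ℂ] H} {f : ℕ → H →L[ℂ] H}
    (hk : IsSelfAdjoint k) (hy : IsSelfAdjoint y)
    (hf : ∀ n, f n ≤ y) (ht : ∀ ξ, Tendsto (fun n => f n ξ) atTop (𝓝 (k ξ))) : k ≤ y := by
  rw [ContinuousLinearMap.le_def, ContinuousLinearMap.isPositive_def']
  refine ⟨hy.sub hk, fun ξ => ?_⟩
  have h1 : Tendsto (fun n => (y - f n).reApplyInnerSelf ξ) atTop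
      (𝓝 ((y - k).reApplyInnerSelf ξ)) := by
    simp only [ContinuousLinearMap.reApplyInnerSelf, _root_.sub_apply]
    have := ((tendsto_const_nhds (x := y ξ)).sub (ht ξ)).inner (𝕜 := ℂ)
      (tendsto_const_nhds (x := ξ))
    exact (Complex.continuous_re.tendsto _).comp this
  refine ge_of_tendsto h1 (Eventually.of_forall fun n => ?_)
  exact ((ContinuousLinearMap.isPositive_def'.1 ((ContinuousLinearMap.le_def _ _).1 (hf n))).2 ξ)

theorem supp_finite {M : VonNeumannAlgebra H} {τ : (H →L[ℂ] H) → ENNReal}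
    (hτ : IsFNSTrace M τ) {e r : H →L[ℂ] H} (heM : e ∈ M) (he : IsProjection e)
    (hrM : r ∈ M) (hr : IsProjection r) (hrτ : τ r < ⊤) :
    ∃ k ∈ M, IsProjection k ∧ e * k = k ∧ τ k < ⊤ ∧ r * (e - k) = 0 := by
  set x := r * e with hx
  have hxM : x ∈ M := mul_mem hrM heM
  obtain ⟨k, hk, hxk, hk0, hkc, hkp⟩ := exists_supp x
  have hkM : k ∈ M := supp_mem M hxM hkc
  have hke : k * e = k := by
    have := hk0 (1 - e) (by rw [hx, mul_assoc, mul_sub, he.1]; simp)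
    rw [mul_sub, mul_one, sub_eq_zero] at this
    exact this.symm
  have hek : e * k = k := by
    have := congrArg star hke
    simpa [he.2, hk.2] using this
  refine ⟨k, hkM, hk, hek, ?_, ?_⟩
  swap
  · rw [mul_sub, ← hek, ← mul_assoc, ← hx, hxk, sub_self]
  set T := star x * x with hTdef
  have hT0 : 0 ≤ T := star_mul_self_nonneg x
  have hTsa : IsSelfAdjoint T := hT0.isSelfAdjoint
  have hTM : T ∈ M := mul_mem (star_mem hxM) hxM
  have hTk : T * k = T := by rw [hTdef, mul_assoc, hxk]
  have hTspec : ∀ t ∈ spectrum ℝ T, 0 ≤ t := fun t ht => spectrum_nonneg_of_nonneg hT0 ht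
  let d : ℕ → ℝ := fun n => 1 / ((n : ℝ) + 1)
  have hd : ∀ n, 0 < d n := fun n => by positivity
  have hda : Antitone d := fun m n h => one_div_le_one_div_of_le (by positivity)
    (by have : (m : ℝ) ≤ n := by exact_mod_cast h
        linarith)
  have hpos : ∀ n t, 0 < max t (d n) := fun n t => lt_of_lt_of_le (hd n) (le_max_right _ _)
  have hc : ∀ n, Continuous fun t : ℝ => (max t (d n))⁻¹ := fun n =>
    (continuous_id.max continuous_const).inv₀ (fun t => (hpos n t).ne')
  let f : ℕ → H →L[ℂ] H := fun n => cfc (fun t : ℝ => (max t (d n))⁻¹ * t) T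
  have hfM : ∀ n, f n ∈ M := fun n => cfc_mem M hTM _
  have hf0 : ∀ n, 0 ≤ f n := fun n => cfc_nonneg (fun t ht =>
    mul_nonneg (inv_nonneg.2 (hpos n t).le) (hTspec t ht))
  have hf1 : ∀ n, f n ≤ 1 := fun n => cfc_le_one _ _ (fun t ht => by
    rw [inv_mul_le_iff₀ (hpos n t)]; simp)
  have hfmul : ∀ n, f n = cfc (fun t : ℝ => (max t (d n))⁻¹) T * T := fun n =>
    (cfc_mul_self_aux hTsa (hc n)).symm
  have hfk : ∀ n, f n * k = f n := fun n => by rw [hfmul, mul_assoc, hTk]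
  have hkf : ∀ n, k * f n = f n := fun n => by
    have := congrArg star (hfk n)
    rwa [star_mul, hk.2, cfc_sa] at this
  have hfle : ∀ n, f n ≤ k := fun n => le_proj hk (hf1 n) (by rw [hkf, hfk])
  have hfmono : Monotone f := by
    intro m n hmn
    refine cfc_mono (fun t ht => ?_) ((hc m).mul continuous_id).continuousOn
      ((hc n).mul continuous_id).continuousOn
    apply mul_le_mul_of_nonneg_right _ (hTspec t ht)
    exact inv_anti₀ (hpos n t) (max_le_max le_rfl (hda hmn))
  have hfτ : ∀ n, τ (f n) ≤ τ r := by
    intro n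
    set s := cfc (fun t : ℝ => √((max t (d n))⁻¹)) T with hs
    have hsM : s ∈ M := cfc_mem M hTM _
    have hssa : star s = s := cfc_sa _ _
    set w := x * s with hw
    have hwM : w ∈ M := mul_mem hxM hsM
    have hww : star w * w = f n := by
      have hcs : Continuous fun t : ℝ => √((max t (d n))⁻¹) := (hc n).sqrt
      have e1 : star w * w = s * T * s := by
        rw [hw, star_mul, hssa, hTdef]; noncomm_ring
      rw [e1, hs, cfc_mul_self_aux hTsa hcs, cfc_mul_aux (by fun_prop) hcs]
      apply cfc_congr
      intro t _
      have := Real.mul_self_sqrt (inv_nonneg.2 (hpos n t).le)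
      simp only
      linear_combination t * this
    rw [← hww, hτ.tracial w hwM]
    have hw0 := mul_star_self_nonneg w
    refine trace_mono hτ (mul_mem hwM (star_mem hwM)) hrM hw0 ?_
    have hrw : r * w = w := by rw [hw, hx, ← mul_assoc, ← mul_assoc, hr.1]
    have hwr : star w * r = star w := by
      have := congrArg star hrw
      rwa [star_mul, hr.2] at this
    apply le_proj hr
    · rw [← CStarAlgebra.norm_le_one_iff_of_nonneg _ hw0, CStarRing.norm_self_mul_star,
        ← CStarRing.norm_star_mul_self, hww, CStarAlgebra.norm_le_one_iff_of_nonneg _ (hf0 n)]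
      exact hf1 n
    · rw [← mul_assoc, hrw, mul_assoc, hwr]
  have hTf : ∀ n, ‖(1 - f n) * T‖ ≤ d n := by
    intro n
    have h1 : (1 : H →L[ℂ] H) = cfc (fun _ : ℝ => 1) T := (cfc_const_one ℝ T hTsa).symm
    have hcf : Continuous fun t : ℝ => (max t (d n))⁻¹ * t := (hc n).mul continuous_id
    rw [h1, ← cfc_sub _ _ T (by fun_prop) hcf.continuousOn,
      cfc_mul_self_aux hTsa (by fun_prop)]
    apply norm_cfc_le (hd n).le
    intro t ht
    have h0 := hTspec t ht
    rcases le_total t (d n) with h | h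
    · rw [max_eq_right h]
      have h3 : (d n)⁻¹ * t ≤ 1 := by rw [inv_mul_le_iff₀ (hd n)]; simpa using h
      have h4 : 0 ≤ (d n)⁻¹ * t := mul_nonneg (inv_nonneg.2 (hd n).le) h0
      rw [Real.norm_of_nonneg (mul_nonneg (by linarith) h0)]
      nlinarith
    · rw [max_eq_left h, inv_mul_cancel₀ (by linarith [hd n])]
      simpa using (hd n).le
  have hlim : ∀ ξ, Tendsto (fun n => f n ξ) atTop (𝓝 (k ξ)) := by
    intro ξ
    have hmem : k ξ ∈ closure (Set.range T) := by
      have hk1 : k ξ ∈ (T.ker)ᗮ := by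
        intro η hη
        have hη' : T η = 0 := hη
        have hxη : x η = 0 := by
          have : inner ℂ (x η) (x η) = 0 := by
            rw [← ContinuousLinearMap.adjoint_inner_right]
            have : T η = (ContinuousLinearMap.adjoint x) (x η) := rfl
            rw [← this, hη', inner_zero_right]
          exact inner_self_eq_zero.1 this
        have hkη : k η = 0 := hkp η hxη
        have : inner ℂ (k η) ξ = inner ℂ η (k ξ) := by
          have e : ContinuousLinearMap.adjoint k = k := hk.2
          conv_lhs => rw [← e]
          rw [ContinuousLinearMap.adjoint_inner_left]
        rw [← this, hkη, inner_zero_left]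
      rw [ContinuousLinearMap.orthogonal_ker] at hk1
      have e : ContinuousLinearMap.adjoint T = T := hTsa
      rw [e] at hk1
      exact hk1
    rw [Metric.tendsto_atTop]
    intro ε hε
    rw [Metric.mem_closure_iff] at hmem
    obtain ⟨_, ⟨ζ, rfl⟩, hζ⟩ := hmem (ε / 2) (by positivity)
    have hd0 : Tendsto (fun n => d n * ‖ζ‖) atTop (𝓝 0) := by
      have := tendsto_one_div_add_atTop_nhds_zero_nat (𝕜 := ℝ)
      simpa [d] using this.mul_const ‖ζ‖
    obtain ⟨N, hN⟩ := (hd0.eventually (gt_mem_nhds (show (0 : ℝ) < ε / 2 by positivity))).exists_forall_of_atTop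
    refine ⟨N, fun n hn => ?_⟩
    have e1 : f n ξ = f n (k ξ) := (congrArg (fun g : H →L[ℂ] H => g ξ) (hfk n)).symm
    have e2 : k ξ - f n ξ = (1 - f n) (k ξ - T ζ) + ((1 - f n) * T) ζ := by
      rw [e1]
      simp [map_sub]
    have hn1 : ‖1 - f n‖ ≤ 1 := by
      rw [CStarAlgebra.norm_le_one_iff_of_nonneg _ (sub_nonneg.2 (hf1 n))]
      exact sub_le_self _ (hf0 n)
    rw [dist_comm, dist_eq_norm, e2]
    have b1 := (1 - f n).le_of_opNorm_le hn1 (k ξ - T ζ)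
    have b2 := ((1 - f n) * T).le_of_opNorm_le (hTf n) ζ
    rw [dist_eq_norm] at hζ
    have b3 := hN n hn
    have := norm_add_le ((1 - f n) (k ξ - T ζ)) (((1 - f n) * T) ζ)
    linarith
  have hlub : IsLUB (Set.range (fun i : ULift ℕ => f i.down)) k := by
    constructor
    · rintro _ ⟨i, rfl⟩
      exact hfle _
    · intro y hy
      have hyf : ∀ n, f n ≤ y := fun n => hy ⟨⟨n⟩, rfl⟩
      exact le_of_tendsto_aux hk.2 ((hf0 0).trans (hyf 0)).isSelfAdjoint hyf hlim
  have := hτ.normal (ULift ℕ) (fun i => f i.down) k (fun i => hfM _) (fun i => hf0 _)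
    (fun i j h => hfmono h) ⟨1, fun i =>
      (CStarAlgebra.norm_le_one_iff_of_nonneg _ (hf0 _)).2 (hf1 _)⟩ hkM hlub
  rw [this]
  exact lt_of_le_of_lt (iSup_le fun i => hfτ _) hrτ

end VNA
namespace VNA
variable {H : Type*} [NormedAddCommGroup H] [InnerProductSpace ℂ H] [CompleteSpace H]

theorem IsProjection.comm_le {p q : H →L[ℂ] H} (hp : IsProjection p) (hq : IsProjection q)
    (h : p * q = q) : q * p = q := by
  have := congrArg star h
  simpa [hp.2, hq.2] using this

/-- A maximal partial isometry from `f` into `h`. -/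
theorem exists_maximal (M : VonNeumannAlgebra H) {f h : H →L[ℂ] H} (hfM : f ∈ M) (hhM : h ∈ M)
    (hf : IsProjection f) (hh : IsProjection h) :
    ∃ u ∈ M, u * star u * u = u ∧ u * f = u ∧ h * u = u ∧
      ∀ y ∈ M, (f - star u * u) * y * (h - u * star u) = 0 := by
  let P : Set (Set (H →L[ℂ] H)) := {S | (∀ v ∈ S, v ∈ M ∧ v ≠ 0 ∧ v * star v * v = v ∧
      v * f = v ∧ h * v = v) ∧
    ∀ v ∈ S, ∀ w ∈ S, v ≠ w → star v * w = 0 ∧ v * star w = 0}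
  obtain ⟨S, hS⟩ := zorn_subset P (by
    intro c hc hch
    refine ⟨⋃₀ c, ⟨?_, ?_⟩, fun s hs => Set.subset_sUnion_of_mem hs⟩
    · rintro v ⟨s, hs, hv⟩
      exact (hc hs).1 v hv
    · rintro v ⟨s, hs, hv⟩ w ⟨t, ht, hw⟩ hvw
      rcases hch.total hs ht with hst | hst
      · exact (hc ht).2 v (hst hv) w hw hvw
      · exact (hc hs).2 v hv w (hst hw) hvw)
  obtain ⟨hS1, hS2⟩ := hS.prop
  obtain ⟨u, huM, hl, hrr, hs1, hs2, hpi⟩ := exists_sum M (fun v : S => (v : H →L[ℂ] H))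
    (fun v => (hS1 v v.2).1) (fun v => (hS1 v v.2).2.2.1)
    (fun v w hvw => (hS2 v v.2 w w.2 (fun h => hvw (Subtype.ext h))).1)
    (fun v w hvw => (hS2 v v.2 w w.2 (fun h => hvw (Subtype.ext h))).2)
  have huf : u * f = u := by
    have := hrr (1 - f) (fun v => by rw [mul_sub, (hS1 v v.2).2.2.2.1]; simp)
    rw [mul_sub, mul_one, sub_eq_zero] at this
    exact this.symm
  have hhu : h * u = u := by
    have := hl (1 - h) (fun v => by rw [sub_mul, (hS1 v v.2).2.2.2.2]; simp)
    rw [sub_mul, one_mul, sub_eq_zero] at this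
    exact this.symm
  refine ⟨u, huM, hpi, huf, hhu, ?_⟩
  set f1 := f - star u * u with hf1
  set h1 := h - u * star u with hh1
  have hsu : ∀ v ∈ S, f1 * star v = 0 := by
    intro v hv
    have e1 : u * (star v * v) = v := hs1 ⟨v, hv⟩
    have e2 : star v * u = star v * v := hs2 ⟨v, hv⟩
    have e3 : v * star v * v = v := (hS1 v hv).2.2.1
    have e4 : f * star v = star v := by
      have := congrArg star (hS1 v hv).2.2.2.1
      rwa [star_mul, hf.2] at this
    have e5 : star v * v * star v = star v := by
      have := congrArg star e3
      simpa [mul_assoc] using this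
    have e6 : star u * v = star v * v := by
      have := congrArg star e2
      simpa using this
    rw [hf1, sub_mul, e4, sub_eq_zero]
    calc star v = star v * v * star v := e5.symm
      _ = star u * v * star v := by rw [e6]
      _ = star u * (u * (star v * v)) * star v := by rw [e1]
      _ = star u * u * (star v * v * star v) := by noncomm_ring
      _ = star u * u * star v := by rw [e5]
  have hvh : ∀ v ∈ S, star v * h1 = 0 := by
    intro v hv
    have e1 : u * (star v * v) = v := hs1 ⟨v, hv⟩
    have e2 : star v * u = star v * v := hs2 ⟨v, hv⟩
    have e4 : star v * h = star v := by
      have := congrArg star (hS1 v hv).2.2.2.2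
      rwa [star_mul, hh.2] at this
    have e5 : star v * v * star u = star v := by
      have := congrArg star e1
      simpa [mul_assoc] using this
    rw [hh1, mul_sub, e4, ← mul_assoc, e2, e5, sub_self]
  obtain ⟨hp1, hp2⟩ := pi_supp hpi
  have hf1P : IsProjection f1 := hf.sub hp1 (by
    have := congrArg star huf
    rw [star_mul, hf.2] at this
    rw [← mul_assoc, this])
  have hh1P : IsProjection h1 := hh.sub hp2 (by rw [← mul_assoc, hhu])
  have hf1f : f1 * f = f1 := by
    rw [hf1, sub_mul, hf.1, mul_assoc, huf]
  have hhh1 : h * h1 = h1 := by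
    rw [hh1, mul_sub, hh.1, ← mul_assoc, hhu]
  intro y hy
  by_contra hne
  have hx0 : h1 * star y * f1 ≠ 0 := by
    intro h0
    apply hne
    have := congrArg star h0
    simpa [hf1P.2, hh1P.2, mul_assoc] using this
  have hh1M : h1 ∈ M := sub_mem hhM (mul_mem huM (star_mem huM))
  have hf1M : f1 ∈ M := sub_mem hfM (mul_mem (star_mem huM) huM)
  obtain ⟨v, hvM, hv0, hvpi, hva, hvb⟩ := exists_pi M (h1 * star y * f1)
    (mul_mem (mul_mem hh1M (star_mem hy)) hf1M) hx0
  have hh1v : h1 * v = v := by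
    have := hva (1 - h1) (by
      rw [← mul_assoc, ← mul_assoc, sub_mul 1 h1 h1, hh1P.1]; simp)
    rw [sub_mul, one_mul, sub_eq_zero] at this
    exact this.symm
  have hvf1 : v * f1 = v := by
    have := hvb (1 - f1) (by rw [mul_assoc, mul_sub, hf1P.1]; simp)
    rw [mul_sub, mul_one, sub_eq_zero] at this
    exact this.symm
  have ho1 : ∀ w ∈ S, star w * v = 0 := fun w hw => by
    rw [← hh1v, ← mul_assoc, hvh w hw, zero_mul]
  have ho2 : ∀ w ∈ S, v * star w = 0 := fun w hw => by
    rw [← hvf1, mul_assoc, hsu w hw, mul_zero]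
  have hvS : v ∉ S := fun hv => hv0 (eq_zero_of_star_mul (ho1 v hv))
  have hins : insert v S ∈ P := by
    refine ⟨?_, ?_⟩
    · rintro w (rfl | hw)
      · refine ⟨hvM, hv0, hvpi, ?_, ?_⟩
        · rw [← hvf1, mul_assoc, hf1f]
        · rw [← hh1v, ← mul_assoc, hhh1]
      · exact hS1 w hw
    · rintro a (rfl | ha) b (rfl | hb) hab
      · exact absurd rfl hab
      · refine ⟨?_, ho2 b hb⟩
        have := congrArg star (ho1 b hb)
        simpa using this
      · refine ⟨ho1 a ha, ?_⟩
        have := congrArg star (ho2 a ha)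
        simpa using this
      · exact hS2 a ha b hb hab
  exact hvS (hS.le_of_ge hins (Set.subset_insert v S) (Set.mem_insert v S))

theorem exists_embed {M : VonNeumannAlgebra H} {τ : (H →L[ℂ] H) → ENNReal}
    (hτ : IsFNSTrace M τ) {e f k : H →L[ℂ] H} (heM : e ∈ M) (he : IsProjection e)
    (hinf : ∀ z, IsCentralProjection M z → τ (z * e) < ⊤ → z * e = 0)
    (hfM : f ∈ M) (hf : IsProjection f) (hef : e * f = f) (hfτ : τ f < ⊤)
    (hkM : k ∈ M) (hk : IsProjection k) (hek : e * k = k) (hkτ : τ k < ⊤) :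
    ∃ u ∈ M, star u * u = f ∧ e * u = u ∧ k * u = 0 := by
  have hh : IsProjection (e - k) := he.sub hk hek
  have hke := he.comm_le hk hek
  obtain ⟨u, huM, hpi, huf, hhu, hzero⟩ := exists_maximal M hfM (sub_mem heM hkM) hf hh
  set f1 := f - star u * u with hf1
  set h1 := e - k - u * star u with hh1
  have hh1M : h1 ∈ M := sub_mem (sub_mem heM hkM) (mul_mem huM (star_mem huM))
  obtain ⟨z, hz, hzh, hza⟩ := exists_central M h1 hh1M
  have hf1z : f1 * z = 0 := hza f1 hzero
  have hzc : ∀ y ∈ M, z * y = y * z := hz.2.2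
  have hzM : z ∈ M := hz.2.1
  set c := 1 - z with hc
  have hcP : IsProjection c := hz.1.compl
  have hcM : c ∈ M := sub_mem (one_mem M) hzM
  have hcc : ∀ y ∈ M, c * y = y * c := fun y hy => by
    rw [hc, sub_mul, mul_sub, hzc y hy]; simp
  obtain ⟨hp1, hp2⟩ := pi_supp hpi
  have hch : c * h1 = 0 := by rw [hc, sub_mul, hzh]; simp
  have hce : c * e = c * (u * star u) + c * k := by
    have : e = h1 + u * star u + k := by rw [hh1, sub_add_cancel, sub_add_cancel]
    rw [this, mul_add, mul_add, hch, zero_add]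
  have hcu : c * (u * star u) = (c * u) * star (c * u) := by
    rw [star_mul, hcP.2, hcc u huM]
    have e1 : c * star u = star u * c := hcc _ (star_mem huM)
    calc c * (u * star u) = (c * c) * u * star u := by rw [hcP.1, mul_assoc]
      _ = c * (c * u) * star u := by noncomm_ring
      _ = c * (u * c) * star u := by rw [hcc u huM]
      _ = (c * u) * (c * star u) := by noncomm_ring
      _ = u * c * (star u * c) := by rw [hcc u huM, e1]
  have hcu' : star (c * u) * (c * u) = c * (star u * u) := by
    rw [star_mul, hcP.2]
    calc star u * c * (c * u) = star u * (c * c) * u := by noncomm_ring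
      _ = (star u * c) * u := by rw [hcP.1]
      _ = c * (star u * u) := by rw [← hcc _ (star_mem huM)]; noncomm_ring
  have hle : ∀ q ∈ M, IsProjection q → IsProjection (c * q) ∧ c * q ≤ q := by
    intro q hqM hq
    have h1 := hcP.mul hq (hcc q hqM)
    refine ⟨h1, hq.le_of_mul h1 ?_⟩
    rw [hcc q hqM, ← mul_assoc, hq.1]
  have hufl : star u * u ≤ f := hf.le_of_mul hp1 (by
    have := congrArg star huf
    rw [star_mul, hf.2] at this
    rw [← mul_assoc, this])
  have hτ1 : τ (c * (u * star u)) < ⊤ := by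
    rw [hcu, ← hτ.tracial _ (mul_mem hcM huM), hcu']
    have hM1 : star u * u ∈ M := mul_mem (star_mem huM) huM
    have := hle _ hM1 hp1
    exact lt_of_le_of_lt (trace_mono hτ (mul_mem hcM hM1) hfM this.1.nonneg
      (this.2.trans hufl)) hfτ
  have hτ2 : τ (c * k) < ⊤ :=
    lt_of_le_of_lt (trace_mono hτ (mul_mem hcM hkM) hkM (hle k hkM hk).1.nonneg (hle k hkM hk).2) hkτ
  have hce0 : c * e = 0 := by
    apply hinf c ⟨hcP, hcM, hcc⟩
    rw [hce, hτ.additive _ _ (mul_mem hcM (mul_mem huM (star_mem huM))) (mul_mem hcM hkM)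
      (hle _ (mul_mem huM (star_mem huM)) hp2).1.nonneg (hle k hkM hk).1.nonneg]
    exact ENNReal.add_lt_top.2 ⟨hτ1, hτ2⟩
  have hef1 : e * f1 = f1 := by
    have h5 : e * star u = star u := by
      have h6 := congrArg star huf
      rw [star_mul, hf.2] at h6
      rw [← h6, ← mul_assoc, hef]
    rw [hf1, mul_sub, hef, ← mul_assoc, h5]
  have hf10 : f1 = 0 := by
    have h1M : f1 ∈ M := sub_mem hfM (mul_mem (star_mem huM) huM)
    have e1 : c * f1 = 0 := by rw [← hef1, ← mul_assoc, hce0, zero_mul]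
    rw [hcc f1 h1M, hc, mul_sub, hf1z] at e1
    simpa using e1
  refine ⟨u, huM, (sub_eq_zero.1 hf10).symm, ?_, ?_⟩
  · rw [← hhu, ← mul_assoc, mul_sub, he.1, hek]
  · rw [← hhu, ← mul_assoc, mul_sub, hke, hk.1, sub_self, zero_mul]

/-- Claim B. -/
theorem exists_iso {M : VonNeumannAlgebra H} {τ : (H →L[ℂ] H) → ENNReal}
    (hτ : IsFNSTrace M τ) {e r : H →L[ℂ] H} (heM : e ∈ M) (he : IsProjection e)
    (hinf : ∀ z, IsCentralProjection M z → τ (z * e) < ⊤ → z * e = 0)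
    (hrM : r ∈ M) (hr : IsProjection r) (hrτ : τ r < ⊤) :
    ∃ v ∈ M, star v * v = e ∧ e * v = v ∧ r * v = 0 := by
  obtain ⟨f, hfM, hf, hef, hfτ, hrf⟩ := supp_finite hτ heM he hrM hr hrτ
  have hfe := he.comm_le hf hef
  let G := {k : H →L[ℂ] H // k ∈ M ∧ IsProjection k ∧ e * k = k ∧ τ k < ⊤}
  have hex : ∀ k : G, ∃ u ∈ M, star u * u = f ∧ e * u = u ∧ k.1 * u = 0 := fun k =>
    exists_embed hτ heM he hinf hfM hf hef hfτ k.2.1 k.2.2.1 k.2.2.2.1 k.2.2.2.2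
  choose U hUM hUf heU hkU using hex
  have hUP : ∀ k, IsProjection (U k * star (U k)) := fun k => by
    apply (pi_supp _).2
    rw [mul_assoc, hUf, mul_supp hf (hUf k)]
  have hstep : ∀ k : G, (k.1 + U k * star (U k)) ∈ M ∧ IsProjection (k.1 + U k * star (U k)) ∧
      e * (k.1 + U k * star (U k)) = k.1 + U k * star (U k) ∧ τ (k.1 + U k * star (U k)) < ⊤ := by
    intro k
    have hsk : star (U k) * k.1 = 0 := by
      have := congrArg star (hkU k)
      simpa [k.2.2.1.2] using this
    have hUUM := mul_mem (hUM k) (star_mem (hUM k))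
    refine ⟨add_mem k.2.1 hUUM, ⟨?_, ?_⟩, ?_, ?_⟩
    · have e1 : k.1 * (U k * star (U k)) = 0 := by rw [← mul_assoc, hkU, zero_mul]
      have e2 : (U k * star (U k)) * k.1 = 0 := by rw [mul_assoc, hsk, mul_zero]
      rw [add_mul, mul_add, mul_add, e1, e2, k.2.2.1.1, (hUP k).1]; simp
    · rw [star_add, k.2.2.1.2, (hUP k).2]
    · rw [mul_add, k.2.2.2.1, ← mul_assoc, heU]
    · rw [hτ.additive _ _ k.2.1 hUUM k.2.2.1.nonneg (hUP k).nonneg, ← hτ.tracial _ (hUM k), hUf]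
      exact ENNReal.add_lt_top.2 ⟨k.2.2.2.2, hfτ⟩
  let K : ℕ → G := fun n => Nat.rec ⟨f, hfM, hf, hef, hfτ⟩ (fun _ k => ⟨_, hstep k⟩) n
  have hK0 : (K 0).1 = f := rfl
  have hKs : ∀ n, (K (n + 1)).1 = (K n).1 + U (K n) * star (U (K n)) := fun n => rfl
  have hKK : ∀ m n, m ≤ n → (K n).1 * (K m).1 = (K m).1 := by
    intro m n hmn
    induction n, hmn using Nat.le_induction with
    | base => exact (K m).2.2.1.1
    | succ n hmn ih =>
      have hsk : star (U (K n)) * (K n).1 = 0 := by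
        have := congrArg star (hkU (K n))
        simpa [(K n).2.2.1.2] using this
      rw [hKs, add_mul, ih, ← ih, mul_assoc, ← mul_assoc (star _), hsk]; simp
  -- the sequence of partial isometries
  let t : ℕ → H →L[ℂ] H := fun n => Nat.casesOn n f (fun m => U (K m))
  have ht0 : t 0 = f := rfl
  have hts : ∀ n, t (n + 1) = U (K n) := fun n => rfl
  clear_value t
  clear_value K
  have htM : ∀ n, t n ∈ M := by
    intro n; cases n with
    | zero => rw [ht0]; exact hfM
    | succ n => rw [hts]; exact hUM _
  have htf : ∀ n, star (t n) * t n = f := by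
    intro n; cases n with
    | zero => rw [ht0, hf.2, hf.1]
    | succ n => rw [hts]; exact hUf _
  have het : ∀ n, e * t n = t n := by
    intro n; cases n with
    | zero => rw [ht0]; exact hef
    | succ n => rw [hts]; exact heU _
  have htf' : ∀ n, t n * f = t n := fun n => mul_supp hf (htf n)
  have hft' : ∀ n, f * star (t n) = star (t n) := fun n => by
    have := congrArg star (htf' n)
    rwa [star_mul, hf.2] at this
  have hKt : ∀ n, (K n).1 * t n = t n := by
    intro n; cases n with
    | zero => rw [hK0, ht0, hf.1]
    | succ n =>
      rw [hKs, hts, add_mul, hkU, mul_assoc, hUf, mul_supp hf (hUf _), zero_add]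
  have horth' : ∀ m n, m < n → star (t m) * t n = 0 := by
    intro m n hmn
    cases n with
    | zero => omega
    | succ n =>
      have h1 : (K n).1 * t m = t m := by
        rw [← hKt m, ← mul_assoc, hKK m n (by omega)]
      have h2 : star (t m) * (K n).1 = star (t m) := by
        have := congrArg star h1
        rwa [star_mul, (K n).2.2.1.2] at this
      rw [← h2, hts, mul_assoc, hkU, mul_zero]
  have horth : ∀ m n, m ≠ n → star (t m) * t n = 0 := by
    intro m n hmn
    rcases lt_or_gt_of_ne hmn with h | h
    · exact horth' m n h
    · have := congrArg star (horth' n m h)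
      simpa using this
  let s : ℕ → H →L[ℂ] H := fun n => t (n + 1) * star (t n)
  have hss : ∀ n, star (s n) = t n * star (t (n + 1)) := fun n => by simp [s]
  have hssn : ∀ n, star (s n) * s n = t n * star (t n) := fun n => by
    rw [hss]
    calc t n * star (t (n + 1)) * (t (n + 1) * star (t n))
        = t n * (star (t (n + 1)) * t (n + 1)) * star (t n) := by noncomm_ring
      _ = _ := by rw [htf, htf']
  obtain ⟨S, hSM, hl, hrr, hs1, hs2, hpi⟩ := exists_sum M s
    (fun n => mul_mem (htM _) (star_mem (htM _)))
    (fun n => by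
      rw [mul_assoc, hssn]
      calc t (n + 1) * star (t n) * (t n * star (t n))
          = t (n + 1) * (star (t n) * t n) * star (t n) := by noncomm_ring
        _ = _ := by rw [htf, htf'])
    (fun m n hmn => by
      rw [hss]
      calc t m * star (t (m + 1)) * (t (n + 1) * star (t n))
          = t m * (star (t (m + 1)) * t (n + 1)) * star (t n) := by noncomm_ring
        _ = 0 := by rw [horth _ _ (by omega)]; simp)
    (fun m n hmn => by
      rw [hss]
      calc t (m + 1) * star (t m) * (t n * star (t (n + 1)))
          = t (m + 1) * (star (t m) * t n) * star (t (n + 1)) := by noncomm_ring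
        _ = 0 := by rw [horth _ _ hmn]; simp)
  set Q := star S * S with hQ
  have hQP : IsProjection Q := (pi_supp hpi).1
  have hSQ : S * Q = S := by rw [hQ, ← mul_assoc, hpi]
  -- Q t n = t n
  have hQt : ∀ n, Q * t n = t n := by
    intro n
    have e1 : S * (t n * star (t n)) = s n := by rw [← hssn]; exact hs1 n
    have e2 : star S * s n = star (s n) * s n := by
      have := congrArg star (hs2 n)
      simpa using this
    calc Q * t n = Q * (t n * (star (t n) * t n)) := by rw [htf, htf']
      _ = star S * (S * (t n * star (t n))) * t n := by rw [hQ]; noncomm_ring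
      _ = t n * (star (t n) * t n) := by rw [e1, e2, hssn]; noncomm_ring
      _ = t n := by rw [htf, htf']
  have hQS : Q * S = S := by
    have := hl (Q - 1) (fun n => by
      change (Q - 1) * (t (n + 1) * star (t n)) = 0
      rw [sub_mul, ← mul_assoc, hQt]; simp)
    rwa [sub_mul, one_mul, sub_eq_zero] at this
  have hQf : Q * f = f := by rw [← ht0]; exact hQt 0
  have hfQ : f * Q = f := hQP.comm_le hf hQf
  have heS : e * S = S := by
    have := hl (e - 1) (fun n => by
      change (e - 1) * (t (n + 1) * star (t n)) = 0
      rw [sub_mul, ← mul_assoc, het]; simp)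
    rwa [sub_mul, one_mul, sub_eq_zero] at this
  have hSe : S * e = S := by
    have := hrr (e - 1) (fun n => by
      change (t (n + 1) * star (t n)) * (e - 1) = 0
      have : star (t n) * e = star (t n) := by
        have := congrArg star (het n)
        rwa [star_mul, he.2] at this
      rw [mul_sub, mul_assoc, this]; simp)
    rwa [mul_sub, mul_one, sub_eq_zero] at this
  have hfS : f * S = 0 := hl f (fun n => by
    change f * (t (n + 1) * star (t n)) = 0
    have := horth 0 (n + 1) (by omega)
    rw [ht0, hf.2] at this
    rw [← mul_assoc, this, zero_mul])
  have hQe : Q * e = Q := by rw [hQ, mul_assoc, hSe]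
  have heQ : e * Q = Q := by
    have := congrArg star hQe
    simpa [he.2, hQP.2] using this
  have heQP : IsProjection (e - Q) := he.sub hQP heQ
  have hcross : (e - Q) * S = 0 := by rw [sub_mul, heS, hQS, sub_self]
  have hcross' : star S * (e - Q) = 0 := by
    have := congrArg star hcross
    simpa [he.2, hQP.2] using this
  refine ⟨S + (e - Q), add_mem hSM (sub_mem heM (mul_mem (star_mem hSM) hSM)), ?_, ?_, ?_⟩
  · rw [star_add, heQP.2, add_mul, mul_add, mul_add, hcross, hcross', heQP.1, ← hQ]; abel
  · rw [mul_add, heS, mul_sub, he.1, heQ]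
  · have hfv : f * (S + (e - Q)) = 0 := by
      rw [mul_add, hfS, mul_sub, hfe, hfQ]; simp
    have hev : e * (S + (e - Q)) = S + (e - Q) := by rw [mul_add, heS, mul_sub, he.1, heQ]
    have : S + (e - Q) = (e - f) * (S + (e - Q)) := by rw [sub_mul, hfv, hev, sub_zero]
    rw [this, ← mul_assoc, hrf, zero_mul]

end VNA
namespace VNA
variable {H : Type*} [NormedAddCommGroup H] [InnerProductSpace ℂ H] [CompleteSpace H]

theorem halve {a : H →L[ℂ] H} {C : ℝ} (ha : 0 ≤ a) (haC : a ≤ C • (1 : H →L[ℂ] H)) :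
    ∃ E : H →L[ℂ] H, IsProjection E ∧
      (∀ y : H →L[ℂ] H, y * a = a * y → star y * a = a * star y → y * E = E * y) ∧
      0 ≤ a - (C / 2) • E ∧ a - (C / 2) • E ≤ (C / 2) • (1 : H →L[ℂ] H) := by
  have hsa : IsSelfAdjoint a := ha.isSelfAdjoint
  set b := cfc (fun t : ℝ => max (t - C / 2) 0) a with hb
  set b' := cfc (fun t : ℝ => max (C / 2 - t) 0) a with hb'
  have hbb' : b * b' = 0 := by
    rw [hb, hb', cfc_mul_aux (by fun_prop) (by fun_prop), ← cfc_zero ℝ a]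
    apply cfc_congr
    intro t _
    simp only [Pi.zero_apply]
    rcases le_total t (C / 2) with h | h
    · rw [max_eq_right (by linarith)]; simp
    · rw [max_eq_right (a := C / 2 - t) (by linarith)]; simp
  have hsub : a = b - b' + (C / 2) • (1 : H →L[ℂ] H) := by
    have h1 : (C / 2) • (1 : H →L[ℂ] H) = cfc (fun _ : ℝ => C / 2) a := by
      rw [cfc_const _ a hsa, Algebra.algebraMap_eq_smul_one]
    rw [h1, hb, hb', ← cfc_sub _ _ a (by fun_prop) (by fun_prop),
      ← cfc_add a _ _ (by fun_prop) (by fun_prop)]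
    conv_lhs => rw [← cfc_id' ℝ a hsa]
    apply cfc_congr
    intro t _
    simp only
    rcases le_total t (C / 2) with h | h
    · rw [max_eq_right (a := t - C / 2) (by linarith), max_eq_left (by linarith)]; ring
    · rw [max_eq_right (a := C / 2 - t) (by linarith), max_eq_left (by linarith)]; ring
  have hb0 : 0 ≤ b := cfc_nonneg (fun t _ => le_max_right _ _)
  have hb'0 : 0 ≤ b' := cfc_nonneg (fun t _ => le_max_right _ _)
  obtain ⟨E, hE, hbE, hE0, hEc, -⟩ := exists_supp b
  have hEb' : E * b' = 0 := hE0 _ hbb'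
  have hb'E : b' * E = 0 := by
    have := congrArg star hEb'
    rwa [star_mul, hE.2, star_zero, hb', cfc_sa] at this
  have hcomm : ∀ y : H →L[ℂ] H, y * a = a * y → star y * a = a * star y → y * E = E * y := by
    intro y h1 h2
    have c1 : Commute a y := h1.symm
    have c2 : Commute a (star y) := h2.symm
    exact hEc y (c1.cfc_real _).symm.eq (c2.cfc_real _).symm.eq
  have haE : a * E = b + (C / 2) • E := by
    conv_lhs => rw [hsub]
    rw [add_mul, sub_mul, hbE, hb'E, sub_zero, smul_mul_assoc, one_mul]
  have hEa : a * E = E * a := hcomm a rfl (by rw [hsa.star_eq])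
  refine ⟨E, hE, hcomm, ?_, ?_⟩
  · have e1 : a - (C / 2) • E = b + star (1 - E) * a * (1 - E) := by
      have : star (1 - E) * a * (1 - E) = a - a * E := by
        rw [hE.compl.2, sub_mul, one_mul, ← hEa, ← mul_one_sub, mul_assoc, hE.compl.1, mul_one_sub]
      rw [this, haE]; abel
    rw [e1]
    exact add_nonneg hb0 (star_left_conjugate_nonneg ha _)
  · rw [← sub_nonneg]
    have e1 : (C / 2) • (1 : H →L[ℂ] H) - (a - (C / 2) • E)
        = b' + star E * (C • (1 : H →L[ℂ] H) - a) * E := by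
      have h1 : star E * (C • (1 : H →L[ℂ] H) - a) * E = C • E - a * E := by
        rw [hE.2, mul_sub, sub_mul, ← hEa, mul_assoc a E E, hE.1]
        simp [hE.1]
      rw [h1, haE]
      have h2 : C • E = (C / 2) • E + (C / 2) • E := by rw [← add_smul, add_halves]
      rw [h2]
      conv_lhs => rw [hsub]
      abel
    rw [e1]
    exact add_nonneg hb'0 (star_left_conjugate_nonneg (sub_nonneg.2 haC) _)

theorem approx (W : Set (H →L[ℂ] H)) (hWs : ∀ y ∈ W, star y ∈ W) (m : ℕ) :
    ∀ (C : ℝ) (a : H →L[ℂ] H), 0 ≤ C → 0 ≤ a → a ≤ C • (1 : H →L[ℂ] H) →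
      (∀ y ∈ W, y * a = a * y) →
      ∃ L : Finset (H →L[ℂ] H), (∀ E ∈ L, IsProjection E ∧ ∀ y ∈ W, y * E = E * y) ∧
        ∀ v : H →L[ℂ] H, ‖v‖ ≤ 1 → (∀ E ∈ L, v * E = E * v) →
          ‖v * a - a * v‖ ≤ 2 * (C / 2 ^ m) := by
  classical
  induction m with
  | zero =>
    intro C a hC ha haC _
    refine ⟨∅, by simp, fun v hv _ => ?_⟩
    have hn : ‖a‖ ≤ C := by
      rw [CStarAlgebra.norm_le_iff_le_algebraMap a hC ha, Algebra.algebraMap_eq_smul_one]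
      exact haC
    have h1 : ‖v * a‖ ≤ C := (norm_mul_le _ _).trans (by nlinarith [norm_nonneg v, norm_nonneg a])
    have h2 : ‖a * v‖ ≤ C := (norm_mul_le _ _).trans (by nlinarith [norm_nonneg v, norm_nonneg a])
    have := norm_sub_le (v * a) (a * v)
    simp only [pow_zero, div_one]
    linarith
  | succ m ih =>
    intro C a hC ha haC hW
    obtain ⟨E, hE, hEc, h1, h2⟩ := halve ha haC
    have hEW : ∀ y ∈ W, y * E = E * y := fun y hy => hEc y (hW y hy) (hW _ (hWs y hy))
    obtain ⟨L, hL1, hL2⟩ := ih (C / 2) (a - (C / 2) • E) (by positivity) h1 h2 (fun y hy => by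
      rw [mul_sub, sub_mul, hW y hy, mul_smul_comm, smul_mul_assoc, hEW y hy])
    refine ⟨insert E L, ?_, ?_⟩
    · intro F hF
      rcases Finset.mem_insert.1 hF with rfl | hF
      · exact ⟨hE, hEW⟩
      · exact hL1 F hF
    · intro v hv hvL
      have := hL2 v hv (fun F hF => hvL F (Finset.mem_insert_of_mem hF))
      have hvE := hvL E (Finset.mem_insert_self _ _)
      have e1 : v * (a - (C / 2) • E) - (a - (C / 2) • E) * v = v * a - a * v := by
        rw [mul_sub, sub_mul, mul_smul_comm, smul_mul_assoc, hvE]; abel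
      rw [e1] at this
      refine this.trans (le_of_eq ?_)
      rw [pow_succ]; field_simp

theorem approx_sa (W : Set (H →L[ℂ] H)) (hWs : ∀ y ∈ W, star y ∈ W) (a : H →L[ℂ] H)
    (ha : star a = a) (haW : ∀ y ∈ W, y * a = a * y) (ε : ℝ) (hε : 0 < ε) :
    ∃ L : Finset (H →L[ℂ] H), (∀ E ∈ L, IsProjection E ∧ ∀ y ∈ W, y * E = E * y) ∧
      ∀ v : H →L[ℂ] H, ‖v‖ ≤ 1 → (∀ E ∈ L, v * E = E * v) → ‖v * a - a * v‖ ≤ ε := by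
  have hsa : IsSelfAdjoint a := ha
  obtain ⟨m, hm⟩ := pow_unbounded_of_one_lt (4 * ‖a‖ / ε) (one_lt_two)
  have h1 : -(‖a‖ • (1 : H →L[ℂ] H)) ≤ a := by
    have := hsa.neg_algebraMap_norm_le_self
    rwa [Algebra.algebraMap_eq_smul_one] at this
  have h2 : a ≤ ‖a‖ • (1 : H →L[ℂ] H) := by
    have := hsa.le_algebraMap_norm_self
    rwa [Algebra.algebraMap_eq_smul_one] at this
  obtain ⟨L, hL1, hL2⟩ := approx W hWs m (2 * ‖a‖) (a + ‖a‖ • (1 : H →L[ℂ] H)) (by positivity)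
    (by rw [← sub_neg_eq_add]; exact sub_nonneg.2 h1)
    (by rw [two_mul, add_smul]; exact add_le_add_left h2 _)
    (fun y hy => by rw [mul_add, add_mul, haW y hy]; simp)
  refine ⟨L, hL1, fun v hv hvL => ?_⟩
  have := hL2 v hv hvL
  have e1 : v * (a + ‖a‖ • (1 : H →L[ℂ] H)) - (a + ‖a‖ • (1 : H →L[ℂ] H)) * v = v * a - a * v := by
    rw [mul_add, add_mul]; simp
  rw [e1] at this
  refine this.trans ?_
  rw [div_lt_iff₀ hε] at hm
  have h2m : (0 : ℝ) < 2 ^ m := by positivity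
  rw [← mul_div_assoc, div_le_iff₀ h2m]
  linarith

theorem exists_iso_comm {M : VonNeumannAlgebra H} {τ : (H →L[ℂ] H) → ENNReal}
    (hτ : IsFNSTrace M τ) {r : H →L[ℂ] H} (hrM : r ∈ M) (hr : IsProjection r) (hrτ : τ r < ⊤)
    (W : Set (H →L[ℂ] H)) (hWM : ∀ e ∈ W, e ∈ M) (hWc : ∀ x ∈ W, ∀ y ∈ W, x * y = y * x)
    (hWm : ∀ x ∈ W, ∀ y ∈ W, x * y ∈ W) (hWs : ∀ x ∈ W, 1 - x ∈ W)
    (hinf : ∀ e ∈ W, IsProjection e → ∀ z, IsCentralProjection M z → τ (z * e) < ⊤ → z * e = 0)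
    (L : Finset (H →L[ℂ] H)) : (∀ E ∈ L, E ∈ W ∧ IsProjection E) →
    ∀ e ∈ W, IsProjection e →
    ∃ v ∈ M, star v * v = e ∧ e * v = v ∧ r * v = 0 ∧ ∀ E ∈ L, v * E = E * v := by
  classical
  induction L using Finset.induction_on with
  | empty =>
    intro _ e heW he
    obtain ⟨v, h1, h2, h3, h4⟩ := exists_iso hτ (hWM e heW) he (hinf e heW he) hrM hr hrτ
    exact ⟨v, h1, h2, h3, h4, by simp⟩
  | insert E L hEL ih =>
    intro hL e heW he
    obtain ⟨hEW, hE⟩ := hL E (Finset.mem_insert_self _ _)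
    have hL' : ∀ F ∈ L, F ∈ W ∧ IsProjection F := fun F hF => hL F (Finset.mem_insert_of_mem hF)
    have hc1 := hWc E hEW e heW
    have hc2 := hWc (1 - E) (hWs E hEW) e heW
    have hP1 := hE.mul he hc1
    have hP2 := hE.compl.mul he hc2
    obtain ⟨v, hvM, hv1, hv2, hv3, hv4⟩ := ih hL' (E * e) (hWm _ hEW _ heW) hP1
    obtain ⟨w, hwM, hw1, hw2, hw3, hw4⟩ := ih hL' ((1 - E) * e) (hWm _ (hWs E hEW) _ heW) hP2
    have hEv : E * v = v := by rw [← hv2, ← mul_assoc, ← mul_assoc, hE.1]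
    have hEw : E * w = 0 := by
      rw [← hw2, ← mul_assoc, ← mul_assoc, mul_sub, hE.1]; simp
    have hev : e * v = v := by
      rw [← hv2, ← mul_assoc, hc1, ← mul_assoc, he.1]
    have hew : e * w = w := by
      rw [← hw2, ← mul_assoc, hc2, ← mul_assoc, he.1]
    have hvE : v * E = v := by
      have h := mul_supp hP1 hv1
      rw [← h, hc1, mul_assoc, mul_assoc, hE.1]
    have hwE : w * E = 0 := by
      have h := mul_supp hP2 hw1
      rw [← h, hc2, mul_assoc, mul_assoc, sub_mul, hE.1]; simp
    have hvw : star v * w = 0 := by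
      have h : star v * E = star v := by
        have := congrArg star hEv
        rwa [star_mul, hE.2] at this
      rw [← h, mul_assoc, hEw, mul_zero]
    have hwv : star w * v = 0 := by
      have := congrArg star hvw
      simpa using this
    refine ⟨v + w, add_mem hvM hwM, ?_, ?_, ?_, ?_⟩
    · rw [star_add, add_mul, mul_add, mul_add, hvw, hwv, hv1, hw1, sub_mul]; simp
    · rw [mul_add, hev, hew]
    · rw [mul_add, hv3, hw3, add_zero]
    · intro F hF
      rcases Finset.mem_insert.1 hF with rfl | hF
      · rw [add_mul, mul_add, hvE, hwE, hEv, hEw]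
      · rw [add_mul, mul_add, hv4 F hF, hw4 F hF]

theorem tau_finite {M : VonNeumannAlgebra H} {τ : (H →L[ℂ] H) → ENNReal}
    (hτ : IsFNSTrace M τ) {p : H →L[ℂ] H} (hpM : p ∈ M) (hp : IsProjection p) (h : τ p < ⊤) :
    IsFiniteProjection M p := by
  refine ⟨hpM, hp, ?_⟩
  rintro q hqM hq hpq ⟨v, hvM, h1, h2⟩
  have e1 : τ q = τ p := by rw [← h1, ← h2]; exact hτ.tracial v hvM
  have e2 := hτ.additive q (p - q) hqM (sub_mem hpM hqM) hq.nonneg (hp.sub hq hpq).nonneg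
  rw [add_sub_cancel, e1] at e2
  have e3 : τ (p - q) = 0 := by
    have : τ p + τ (p - q) = τ p + 0 := by rw [← e2, add_zero]
    exact (ENNReal.add_right_inj h.ne).1 this
  have := hτ.faithful _ (sub_mem hpM hqM) (hp.sub hq hpq).nonneg e3
  exact (sub_eq_zero.1 this).symm

end VNA

open VNA in
/-- For projections `p, r ∈ M` with `r` τ-finite, there is a partial
isometry `w` with `w w* ≤ 1 - r`, `w* w = p` and `‖[w,α]‖ ≤ ε + ‖[p,α]‖`. -/
theorem statement_17 {H : Type*} [NormedAddCommGroup H] [InnerProductSpace ℂ H]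
    [CompleteSpace H] (M : VonNeumannAlgebra H)
    (hM : ProperlyInfinite M) (hσ : SigmaFinite M)
    (τ : (H →L[ℂ] H) → ENNReal) (hτ : IsFNSTrace M τ)
    (n : ℕ) (hn : 0 < n) (α : Fin n → (H →L[ℂ] H))
    (hα : IsCommutingSelfAdjointTuple M α)
    (htriv : ∀ x ∈ WZstar M (Set.range α), IsFiniteProjection M x → x = 0)
    (p r : H →L[ℂ] H) (hp : p ∈ M ∧ IsProjection p)
    (hr : IsTauFiniteProjection M τ r)
    (ε : ℝ) (hε : 0 < ε) :
    ∃ w, w ∈ M ∧ (1 - r) * (w * star w) = w * star w ∧ star w * w = p ∧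
      commNorm α w ≤ ε + commNorm α p := by
  classical
  obtain ⟨hαM, hαs, hαc⟩ := hα
  obtain ⟨hrM, hr, hrτ⟩ := hr
  obtain ⟨hpM, hp⟩ := hp
  set S : Set (H →L[ℂ] H) := Set.range α ∪ centerSet M with hS
  have hSM : S ⊆ M := by
    rintro x (⟨j, rfl⟩ | hx)
    · exact hαM j
    · exact hx.1
  have hSc : ∀ x ∈ S, ∀ y ∈ S, x * y = y * x := by
    rintro x (⟨i, rfl⟩ | hx) y (⟨j, rfl⟩ | hy)
    · exact hαc i j
    · exact (hy.2 _ (hαM i)).symm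
    · exact hx.2 _ (hαM j)
    · exact hx.2 _ hy.1
  have hSs : ∀ x ∈ S, star x ∈ S := by
    rintro x (⟨j, rfl⟩ | hx)
    · exact Or.inl ⟨j, (hαs j).symm⟩
    · refine Or.inr ⟨star_mem hx.1, fun y hy => ?_⟩
      have := congrArg star (hx.2 (star y) (star_mem hy))
      simpa using this.symm
  set S' := Set.centralizer S with hS'
  set W := Set.centralizer S' with hW
  have hWdef : WZstar M (Set.range α) = W := rfl
  have hS's : ∀ y ∈ S', star y ∈ S' := fun y hy => Set.star_mem_centralizer' hSs hy
  have hSS' : S ⊆ S' := fun x hx y hy => hSc y hy x hx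
  have hWS' : W ⊆ S' := Set.centralizer_subset hSS'
  have hWM : ∀ x ∈ W, x ∈ M := by
    intro x hx
    apply mem_of_comm
    intro y hy
    exact hx y (fun s hs => (comm_of_mem (hSM hs) hy).symm)
  have hWc : ∀ x ∈ W, ∀ y ∈ W, x * y = y * x := fun x hx y hy => hy x (hWS' hx)
  have hWm : ∀ x ∈ W, ∀ y ∈ W, x * y ∈ W := fun x hx y hy => Set.mul_mem_centralizer hx hy
  have hW1 : ∀ x ∈ W, 1 - x ∈ W := by
    intro x hx y hy
    rw [mul_sub, sub_mul, hx y hy]; simp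
  have hSW : S ⊆ W := Set.subset_centralizer_centralizer
  have hinf : ∀ e ∈ W, IsProjection e → ∀ z, IsCentralProjection M z → τ (z * e) < ⊤ →
      z * e = 0 := by
    intro e heW he z hz hlt
    have hzW : z ∈ W := hSW (Or.inr hz.2)
    have hze := hWm z hzW e heW
    exact htriv _ hze (tau_finite hτ (hWM _ hze) (hz.1.mul he (hWc z hzW e heW)) hlt)
  have happ := fun j => approx_sa S' hS's (α j) (hαs j)
    (fun y hy => (hy (α j) (Or.inl ⟨j, rfl⟩)).symm) ε hε
  choose L hL1 hL2 using happ
  have h1P : IsProjection (1 : H →L[ℂ] H) := ⟨by simp, by simp⟩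
  obtain ⟨v, hvM, hv1, -, hv3, hv4⟩ := exists_iso_comm hτ hrM hr hrτ W hWM hWc hWm hW1 hinf
    (Finset.univ.biUnion L) (fun E hE => by
      obtain ⟨j, -, hj⟩ := Finset.mem_biUnion.1 hE
      exact ⟨(hL1 j E hj).2, (hL1 j E hj).1⟩) 1 (fun y _ => by simp) h1P
  have hvn : ‖v‖ ≤ 1 := norm_le_one_of_supp h1P hv1
  have hvα : ∀ j, ‖v * α j - α j * v‖ ≤ ε := fun j => hL2 j v hvn (fun E hE =>
    hv4 E (Finset.mem_biUnion.2 ⟨j, Finset.mem_univ j, hE⟩))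
  refine ⟨v * p, mul_mem hvM hpM, ?_, ?_, ?_⟩
  · have : r * (v * p * star (v * p)) = 0 := by
      rw [← mul_assoc, ← mul_assoc, hv3]; simp
    rw [sub_mul, this]; simp
  · calc star (v * p) * (v * p) = p * (star v * v) * p := by
          rw [star_mul, hp.2]; noncomm_ring
      _ = p := by rw [hv1, mul_one, hp.1]
  · have : Nonempty (Fin n) := ⟨⟨0, hn⟩⟩
    unfold commNorm
    apply ciSup_le
    intro j
    have hle : ‖p * α j - α j * p‖ ≤ ⨆ j, ‖p * α j - α j * p‖ :=
      le_ciSup (f := fun j => ‖p * α j - α j * p‖) (Set.finite_range _).bddAbove j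
    have e1 : v * p * α j - α j * (v * p) = (v * α j - α j * v) * p + v * (p * α j - α j * p) := by
      noncomm_ring
    rw [e1]
    have b1 : ‖(v * α j - α j * v) * p‖ ≤ ε := (norm_mul_le _ _).trans (by
      nlinarith [hvα j, norm_le_one_of_proj hp, norm_nonneg p, norm_nonneg (v * α j - α j * v)])
    have b2 : ‖v * (p * α j - α j * p)‖ ≤ ‖p * α j - α j * p‖ := (norm_mul_le _ _).trans (by
      nlinarith [norm_nonneg (p * α j - α j * p)])
    have := norm_add_le ((v * α j - α j * v) * p) (v * (p * α j - α j * p))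
    linarith
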